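/- Let θ ∈ (0, 1/2] be such that θ⁻¹ ≥ 2 is an integer. Then every surjective isometry U : S_{T[θ,S₁]} → S_{T[θ,S₁]} of the unit sphere of T[θ, S₁] extends to a surjective linear isometry Ũ : T[θ, S₁] → T[θ, S₁], i.e., there is a surjective linear isometry Ũ with Ũ(x) = U(x) for all x ∈ S_{T[θ,S₁]}. -/

import Mathlib

open scoped BigOperators

noncomputable section

/-- Projection of a finitely supported vector onto the coordinates in `E`. -/
def tsProj (E : Finset ℕ+) (x : ℕ+ →₀ ℝ) : ℕ+ →₀ ℝ :=
  x.filter fun i => i ∈ E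

/-- The Schreier families `S_n` on the positive integers:
`S₁` consists of the sets `F` with `|F| ≤ min F` (together with `∅`), and `S_{n+1}`
consists of unions `F₁ ∪ ⋯ ∪ F_d` of nonempty members `F₁ < ⋯ < F_d` of `S_n`
with `d ≤ min F₁` (together with `∅`). -/
def Schreier : ℕ → Set (Finset ℕ+)
  | 0 => {F | F.card ≤ 1}
  | 1 => {F | ∀ a ∈ F, F.card ≤ (a : ℕ)}
  | n + 2 =>
      {F | F = ∅ ∨
        ∃ (d : ℕ) (G : Fin d → Finset ℕ+),
          0 < d ∧ (∀ i, G i ∈ Schreier (n + 1)) ∧ (∀ i, (G i).Nonempty) ∧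
          (∀ i j : Fin d, i < j → ∀ a ∈ G i, ∀ b ∈ G j, a < b) ∧
          (∀ i, ∀ a ∈ G i, d ≤ (a : ℕ)) ∧ F = Finset.univ.biUnion G}

/-- A tuple of nonempty finite sets `E 0 < E 1 < ⋯` whose set of minima belongs to `S`. -/
def TsAdmissible (S : Set (Finset ℕ+)) {d : ℕ} (E : Fin d → Finset ℕ+) : Prop :=
  (∀ i, (E i).Nonempty) ∧
  (∀ i j : Fin d, i < j → ∀ a ∈ E i, ∀ b ∈ E j, a < b) ∧
  ∃ μ : Fin d → ℕ+, (∀ i, IsLeast (↑(E i) : Set ℕ+) (μ i)) ∧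
    Finset.univ.image μ ∈ S

/-- The iterated norms `‖·‖_m` in the construction of the Tsirelson norm:
`‖x‖₀` is the supremum norm and
`‖x‖_{m+1} = max(‖x‖_m, sup{θ ∑ᵢ ‖Eᵢ x‖_m : E₁ < ⋯ < E_d, {min Eᵢ} ∈ S})`. -/
def tnormAux (θ : ℝ) (S : Set (Finset ℕ+)) : ℕ → (ℕ+ →₀ ℝ) → ℝ
  | 0, x => ⨆ i, |x i|
  | m + 1, x =>
      max (tnormAux θ S m x)
        (sSup {r : ℝ | ∃ (d : ℕ) (E : Fin d → Finset ℕ+), TsAdmissible S E ∧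
          r = θ * ∑ i, tnormAux θ S m (tsProj (E i) x)})

/-- The Tsirelson norm `‖x‖_{θ,S} = sup_m ‖x‖_m` on `c₀₀`. -/
def tnorm (θ : ℝ) (S : Set (Finset ℕ+)) (x : ℕ+ →₀ ℝ) : ℝ :=
  ⨆ m : ℕ, tnormAux θ S m x

/-- `X`, together with the sequence `e` of unit vectors, is (a realization of) the
Tsirelson space `T[θ, S_n]`: a Banach space containing `c₀₀` isometrically
(w.r.t. the Tsirelson norm) as a dense subspace, in which `(e i)` is a
(1-unconditional) basis, i.e. every `x` has a unique expansion `x = ∑ᵢ aᵢ eᵢ`. -/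
structure IsTsirelsonSpace (θ : ℝ) (n : ℕ) (X : Type*) [NormedAddCommGroup X]
    [NormedSpace ℝ X] (e : ℕ+ → X) : Prop where
  complete : CompleteSpace X
  norm_embed : ∀ a : ℕ+ →₀ ℝ, ‖a.sum fun i c => c • e i‖ = tnorm θ (Schreier n) a
  dense_embed : DenseRange fun a : ℕ+ →₀ ℝ => a.sum fun i c => c • e i
  expansion : ∀ x : X, ∃! a : ℕ+ → ℝ, HasSum (fun i => a i • e i) x

/-! Call `(v, c)` a *spike* if `c` is a norm-one functional with `c v = 1`, the reflection
`x ↦ x - 2 c(x) v` is an isometry, and `‖x + t v‖ ≤ max (|c x + t|, ‖x‖ + θ |t|)`. In `T[θ, S]`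
each unit vector forms a spike with its coordinate functional. For a spike with `θ ≤ 1/2`, the star
of `v` is the face `{c = 1}` of the unit ball, and every unit vector `x` is within `1 - c x` of that
face.

A surjective isometry `U` between unit spheres carries `St(w)` onto the face `St(U w) = {c = 1}`.
This forces `St(w)` to be convex, so by Hahn–Banach it lies on a hyperplane `{f = 1}` with
`‖f‖ ≤ 1`. Comparing distances to the faces `{c = 1}` and `{c = -1}` shows `c ∘ U = f` on the
sphere: every coordinate of `U` is the restriction of a linear functional.
-/

open Metric Set

section Star

variable {E F : Type*} [NormedAddCommGroup E] [NormedAddCommGroup F]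

/-- The star `St(v)` of a vector `v`: the unit vectors at the maximal distance `2` from `-v`. -/
def sphereStar (v : E) : Set E :=
  {x | ‖x‖ = 1 ∧ ‖x + v‖ = 2}

/-- The star of `v` is flat if the norm is additive on any two of its members; a star which is
contained in a convex subset of the unit sphere is flat. -/
def HasFlatStar (v : E) : Prop :=
  ∀ x ∈ sphereStar v, ∀ y ∈ sphereStar v, ‖x + y‖ = 2

lemma norm_map_sub_map {A : Set E} {B : Set F} {U : A → B} (hU : Isometry U) (s t : A) :
    ‖(U s : F) - U t‖ = ‖(s : E) - t‖ := by
  simpa [Subtype.dist_eq, dist_eq_norm] using hU.dist_eq s t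

variable {U : sphere (0 : E) 1 → sphere (0 : F) 1}

lemma neg_map_neg_mem_sphereStar_iff (hU : Isometry U) {w t : sphere (0 : E) 1} :
    -(U (-t) : F) ∈ sphereStar (U w : F) ↔ (t : E) ∈ sphereStar (w : E) := by
  have hdist : ‖-(U (-t) : F) + U w‖ = ‖(t : E) + w‖ := by
    rw [neg_add_eq_sub, norm_map_sub_map hU, coe_neg_sphere, sub_neg_eq_add, add_comm]
  simp [sphereStar, hdist]

variable [NormedSpace ℝ E]

lemma self_mem_sphereStar {v : E} (hv : ‖v‖ = 1) : v ∈ sphereStar v :=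
  ⟨hv, by rw [← two_smul ℝ v, norm_smul, hv]; norm_num⟩

theorem map_mem_sphereStar_iff (hU : Isometry U) (hsurj : Function.Surjective U)
    {w s : sphere (0 : E) 1} (hflat : HasFlatStar (U w : F)) :
    (U s : F) ∈ sphereStar (U w : F) ↔ (s : E) ∈ sphereStar (w : E) := by
  have norm_add_self (t : sphere (0 : E) 1) : ‖(t : E) + t‖ = 2 :=
    (self_mem_sphereStar (norm_eq_of_mem_sphere t)).2
  refine ⟨fun hs => ⟨by simp, ?_⟩, fun hs => ⟨by simp, ?_⟩⟩
  · have hw := (neg_map_neg_mem_sphereStar_iff hU).2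
      (self_mem_sphereStar (norm_eq_of_mem_sphere w))
    have := hflat _ hs _ hw
    rwa [← sub_eq_add_neg, norm_map_sub_map hU, coe_neg_sphere, sub_neg_eq_add] at this
  · obtain ⟨w', hw'⟩ := hsurj (-U w)
    have hUw : (U w : F) = -U w' := by simp [hw']
    have hw'_mem : (U (-w') : F) ∈ sphereStar (U w : F) := by
      refine ⟨by simp, ?_⟩
      rw [hUw, ← sub_eq_add_neg, norm_map_sub_map hU, ← norm_neg]
      simpa [add_comm] using norm_add_self w'
    have := hflat _ hw'_mem _ ((neg_map_neg_mem_sphereStar_iff hU).2 hs)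
    rw [← sub_eq_add_neg, norm_map_sub_map hU, coe_neg_sphere, coe_neg_sphere,
      neg_sub_neg] at this
    rw [hUw, ← sub_eq_add_neg, norm_map_sub_map hU, this]

theorem HasFlatStar.of_map (hU : Isometry U) (hsurj : Function.Surjective U)
    {w : sphere (0 : E) 1} (hflat : HasFlatStar (U w : F)) : HasFlatStar (w : E) := by
  intro x hx y hy
  lift x to sphere (0 : E) 1 using by simpa using hx.1
  lift y to sphere (0 : E) 1 using by simpa using hy.1
  have := hflat _ ((map_mem_sphereStar_iff hU hsurj hflat).2 hx) _
    ((neg_map_neg_mem_sphereStar_iff hU).2 hy)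
  rwa [← sub_eq_add_neg, norm_map_sub_map hU, coe_neg_sphere, sub_neg_eq_add] at this

end Star

section NormingFunctionals

variable {E : Type*} [NormedAddCommGroup E] [NormedSpace ℝ E]

lemma abs_apply_le_norm {f : StrongDual ℝ E} (hf : ‖f‖ ≤ 1) (x : E) : |f x| ≤ ‖x‖ := by
  simpa using f.le_of_opNorm_le hf x

lemma norm_add_eq_two_iff_exists_dual {x y : E} (hx : ‖x‖ ≤ 1) (hy : ‖y‖ ≤ 1) :
    ‖x + y‖ = 2 ↔ ∃ f : StrongDual ℝ E, ‖f‖ ≤ 1 ∧ f x = 1 ∧ f y = 1 := by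
  constructor
  · intro hxy
    obtain ⟨f, hf, hfxy⟩ := exists_dual_vector'' ℝ (x + y)
    have hfx := (le_abs_self _).trans (abs_apply_le_norm hf x)
    have hfy := (le_abs_self _).trans (abs_apply_le_norm hf y)
    have hsum : f x + f y = 2 := by simpa [hxy] using hfxy
    exact ⟨f, hf, by linarith, by linarith⟩
  · rintro ⟨f, hf, hfx, hfy⟩
    have hlower := (le_abs_self _).trans (abs_apply_le_norm hf (x + y))
    rw [map_add, hfx, hfy] at hlower
    linarith [norm_add_le x y]

lemma mem_sphereStar_iff_exists_dual {v x : E} (hv : ‖v‖ = 1) :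
    x ∈ sphereStar v ↔ ‖x‖ ≤ 1 ∧ ∃ f : StrongDual ℝ E, ‖f‖ ≤ 1 ∧ f x = 1 ∧ f v = 1 := by
  constructor
  · rintro ⟨hx, hxv⟩
    exact ⟨hx.le, (norm_add_eq_two_iff_exists_dual hx.le hv.le).1 hxv⟩
  · rintro ⟨hx, f, hf, hfx, hfv⟩
    have hfx_le := abs_apply_le_norm hf x
    rw [hfx, abs_one] at hfx_le
    exact ⟨le_antisymm hx hfx_le,
      (norm_add_eq_two_iff_exists_dual hx hv.le).2 ⟨f, hf, hfx, hfv⟩⟩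

-- For `x, y ∈ St(v)`, a functional norming both the midpoint of `x` and `v` and the vector `y`
-- norms `x`, `v` and `y` simultaneously.
theorem HasFlatStar.convex_sphereStar {v : E} (hflat : HasFlatStar v) (hv : ‖v‖ = 1) :
    Convex ℝ (sphereStar v) := by
  intro x hx y hy a b ha hb hab
  have hmid : midpoint ℝ x v ∈ sphereStar v := by
    obtain ⟨hx1, f, hf, hfx, hfv⟩ := (mem_sphereStar_iff_exists_dual hv).1 hx
    have hball : midpoint ℝ x v ∈ closedBall (0 : E) 1 :=
      (convex_closedBall 0 1).midpoint_mem (by simpa using hx1) (by simp [hv])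
    refine (mem_sphereStar_iff_exists_dual hv).2 ⟨by simpa using hball, f, hf, ?_, hfv⟩
    simp only [midpoint_eq_smul_add, invOf_eq_inv, map_smul, map_add, hfx, hfv, smul_eq_mul]
    norm_num
  obtain ⟨g, hg, hgmid, hgy⟩ :=
    (norm_add_eq_two_iff_exists_dual hmid.1.le hy.1.le).1 (hflat _ hmid y hy)
  have hgx_le := (le_abs_self _).trans ((abs_apply_le_norm hg x).trans hx.1.le)
  have hgv_le := (le_abs_self _).trans ((abs_apply_le_norm hg v).trans hv.le)
  have hgxv : g x + g v = 2 := by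
    simp only [midpoint_eq_smul_add, invOf_eq_inv, map_smul, map_add, smul_eq_mul] at hgmid
    linarith
  have hball : a • x + b • y ∈ closedBall (0 : E) 1 :=
    convex_closedBall 0 1 (by simp [hx.1]) (by simp [hy.1]) ha hb hab
  refine (mem_sphereStar_iff_exists_dual hv).2 ⟨by simpa using hball, g, hg, ?_, by linarith⟩
  have hgx : g x = 1 := by linarith
  simpa [hgx, hgy] using hab

theorem exists_dual_eq_one_of_convex_subset_sphere {C : Set E} (hC : Convex ℝ C)
    (hsphere : C ⊆ sphere 0 1) : ∃ f : StrongDual ℝ E, ‖f‖ ≤ 1 ∧ ∀ x ∈ C, f x = 1 := by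
  obtain ⟨f, u, hball, hCu⟩ := geometric_hahn_banach_open (convex_ball (0 : E) 1) isOpen_ball hC
    (sphere_disjoint_ball.symm.mono_right hsphere)
  have hu : 0 < u := by simpa using hball 0 (by simp)
  have hf : ‖f‖ ≤ u := by
    rw [← f.sSup_unit_ball_eq_norm]
    refine csSup_le ((nonempty_ball.2 one_pos).image _) ?_
    rintro _ ⟨x, hx, rfl⟩
    have hneg := hball (-x) (by simpa using hx)
    rw [map_neg] at hneg
    exact abs_le.2 ⟨by linarith, (hball x hx).le⟩
  have hnorm : ‖u⁻¹ • f‖ ≤ 1 := by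
    rw [norm_smul, norm_inv, Real.norm_of_nonneg hu.le]
    exact inv_mul_le_one_of_le₀ hf hu.le
  refine ⟨u⁻¹ • f, hnorm, fun x hx => le_antisymm ?_ ?_⟩
  · exact (le_abs_self _).trans ((abs_apply_le_norm hnorm x).trans (by simpa using (hsphere hx).le))
  · simpa [← div_eq_inv_mul, one_le_div hu] using hCu x hx

end NormingFunctionals

section Spike

variable {E F : Type*} [NormedAddCommGroup E] [NormedSpace ℝ E]
  [NormedAddCommGroup F] [NormedSpace ℝ F]

-- The solution `m` of `(1 - m) + θ * (1 - (1 - m) * a) = 1` turns the last inequality into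
-- `2 * θ * (1 - a) ≤ 1 - a`.
lemma exists_spike_weight {θ a : ℝ} (hθ0 : 0 ≤ θ) (hθ : θ ≤ 1 / 2) (ha : a ≤ 1) :
    ∃ m : ℝ, 0 ≤ m ∧ m ≤ 1 ∧ 0 ≤ 1 - (1 - m) * a - 2 * (m * a) ∧
      (1 - m) + θ * (1 - (1 - m) * a) ≤ 1 ∧
      m + θ * (1 - (1 - m) * a - 2 * (m * a)) ≤ 1 - a := by
  have hpos : 0 < 1 - a * θ := by nlinarith
  obtain ⟨m, hm⟩ : ∃ m, m * (1 - a * θ) = θ * (1 - a) := ⟨_, div_mul_cancel₀ _ hpos.ne'⟩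
  have hm0 : 0 ≤ m := nonneg_of_mul_nonneg_left (hm ▸ mul_nonneg hθ0 (by linarith)) hpos
  have hm1 : m ≤ 1 := le_of_mul_le_mul_right (by linarith) hpos
  have hβ : (1 - (1 - m) * a - 2 * (m * a)) * (1 - a * θ) = (1 - a) * (1 - 2 * (a * θ)) := by
    linear_combination (-a) * hm
  have hβ0 : 0 ≤ 1 - (1 - m) * a - 2 * (m * a) :=
    nonneg_of_mul_nonneg_left (hβ ▸ mul_nonneg (by linarith) (by nlinarith)) hpos
  exact ⟨m, hm0, hm1, hβ0, by linarith, by nlinarith⟩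

/-- A spike: a vector `v` and a functional `c` with `c v = 1` which share the properties of a unit
vector of the Tsirelson space and its coordinate functional. The norm is unconditional in the
direction of `v`, and moving by `t • v` changes the norm by at most `θ * |t|` until the
`v`-coordinate alone determines it. -/
structure IsSpike (θ : ℝ) (v : E) (c : StrongDual ℝ E) : Prop where
  apply_self : c v = 1
  opNorm_le_one : ‖c‖ ≤ 1
  norm_add_smul_le (x : E) (t : ℝ) : ‖x + t • v‖ ≤ max |c x + t| (‖x‖ + θ * |t|)
  norm_sub_two_smul_le (x : E) : ‖x - (2 * c x) • v‖ ≤ ‖x‖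

namespace IsSpike

variable {θ : ℝ} {v : E} {c : StrongDual ℝ E}

lemma apply_le_norm (h : IsSpike θ v c) (x : E) : c x ≤ ‖x‖ :=
  (le_abs_self _).trans (abs_apply_le_norm h.opNorm_le_one x)

lemma norm_eq_one (h : IsSpike θ v c) (hθ : θ ≤ 1) : ‖v‖ = 1 := by
  refine le_antisymm ?_ (h.apply_self ▸ h.apply_le_norm v)
  simpa [hθ] using h.norm_add_smul_le 0 1

lemma mem_sphereStar_iff (h : IsSpike θ v c) (hθ : θ < 1) {x : E} :
    x ∈ sphereStar v ↔ ‖x‖ = 1 ∧ c x = 1 := by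
  refine ⟨fun ⟨hx, hxv⟩ => ⟨hx, ?_⟩, fun ⟨hx, hcx⟩ =>
    (mem_sphereStar_iff_exists_dual (h.norm_eq_one hθ.le)).2
      ⟨hx.le, c, h.opNorm_le_one, hcx, h.apply_self⟩⟩
  have hcx := abs_le.1 (hx ▸ abs_apply_le_norm h.opNorm_le_one x)
  have hmax := h.norm_add_smul_le x 1
  rw [one_smul, hxv, hx, abs_one, abs_of_nonneg (by linarith), le_max_iff] at hmax
  rcases hmax with hmax | hmax <;> linarith

lemma hasFlatStar (h : IsSpike θ v c) (hθ : θ < 1) : HasFlatStar v := by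
  intro x hx y hy
  rw [h.mem_sphereStar_iff hθ] at hx hy
  exact (norm_add_eq_two_iff_exists_dual hx.1.le hy.1.le).2 ⟨c, h.opNorm_le_one, hx.2, hy.2⟩

lemma norm_add_smul_le' (h : IsSpike θ v c) (x : E) (t : ℝ) :
    ‖x + t • v‖ ≤ max |c x + t| (‖x‖ + θ * |2 * c x + t|) := by
  set y := x + (-(2 * c x + t)) • v with hy
  have hcy : c y = -(c x + t) := by
    simp only [hy, map_add, map_smul, h.apply_self, smul_eq_mul]
    ring
  have hreflect : x + t • v = y - (2 * c y) • v := by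
    rw [hcy, hy]
    module
  calc ‖x + t • v‖ ≤ ‖y‖ := hreflect ▸ h.norm_sub_two_smul_le y
    _ ≤ max |c x + -(2 * c x + t)| (‖x‖ + θ * |-(2 * c x + t)|) := h.norm_add_smul_le _ _
    _ = max |c x + t| (‖x‖ + θ * |2 * c x + t|) := by
      rw [abs_neg, ← abs_neg (c x + t)]
      ring_nf

theorem exists_mem_sphereStar_norm_sub_le (h : IsSpike θ v c) (hθ0 : 0 ≤ θ) (hθ : θ ≤ 1 / 2)
    {x : E} (hx : ‖x‖ = 1) : ∃ y ∈ sphereStar v, ‖x - y‖ ≤ 1 - c x := by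
  have hcx : c x ≤ 1 := hx ▸ h.apply_le_norm x
  obtain ⟨m, hm0, hm1, hβ0, hy_bound, hxy_bound⟩ := exists_spike_weight hθ0 hθ hcx
  set a := c x with ha
  set s := 1 - (1 - m) * a with hs
  have hs0 : 0 ≤ s := by nlinarith
  set y := (1 - m) • x + s • v with hy
  have hcy : c y = 1 := by
    simp only [hy, hs, ha, map_add, map_smul, h.apply_self, smul_eq_mul]
    ring
  have hy_le : ‖y‖ ≤ 1 := by
    refine (h.norm_add_smul_le _ _).trans (max_le ?_ ?_)
    · simp [hs, ← ha]
    · rwa [norm_smul, hx, Real.norm_of_nonneg (by linarith), abs_of_nonneg hs0, mul_one]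
  refine ⟨y, (h.mem_sphereStar_iff (by linarith)).2
    ⟨le_antisymm hy_le (hcy ▸ h.apply_le_norm y), hcy⟩, ?_⟩
  have hxy : x - y = m • x + (-s) • v := by
    rw [hy]
    module
  rw [hxy]
  refine (h.norm_add_smul_le' _ _).trans (max_le ?_ ?_)
  · rw [map_smul, ← ha, smul_eq_mul, abs_of_nonpos] <;> linarith
  · rw [map_smul, ← ha, smul_eq_mul, norm_smul, hx, Real.norm_of_nonneg hm0,
      abs_of_nonpos (by linarith)]
    linarith

theorem exists_dual_eq_comp {v : F} {c : StrongDual ℝ F} (h : IsSpike θ v c) (hθ0 : 0 ≤ θ)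
    (hθ : θ ≤ 1 / 2) {U : sphere (0 : E) 1 → sphere (0 : F) 1} (hU : Isometry U)
    (hsurj : Function.Surjective U) :
    ∃ f : StrongDual ℝ E, ∀ s : sphere (0 : E) 1, f s = c (U s) := by
  have hv := h.norm_eq_one (by linarith)
  obtain ⟨w, hw⟩ := hsurj ⟨v, by simpa using hv⟩
  obtain rfl : (U w : F) = v := by rw [hw]
  have hflat := h.hasFlatStar (by linarith)
  obtain ⟨f, hf, hf_star⟩ := exists_dual_eq_one_of_convex_subset_sphere
    ((hflat.of_map hU hsurj).convex_sphereStar (norm_eq_of_mem_sphere w))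
    fun x hx => by simpa using hx.1
  refine ⟨f, fun s => le_antisymm ?_ ?_⟩
  · obtain ⟨y, hy, hsy⟩ := h.exists_mem_sphereStar_norm_sub_le hθ0 hθ
      (x := -(U s : F)) (by simp)
    obtain ⟨t, ht⟩ := hsurj ⟨-y, by simpa using hy.1⟩
    obtain rfl : y = -(U t : F) := by simp [ht]
    have hft : f (-t) = 1 := hf_star (-t : sphere (0 : E) 1)
      ((neg_map_neg_mem_sphereStar_iff hU).1 (by simpa using hy))
    have hst := (le_abs_self _).trans (abs_apply_le_norm hf ((s : E) - t))
    rw [neg_sub_neg, norm_sub_rev, norm_map_sub_map hU] at hsy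
    simp only [map_sub, map_neg] at hft hst hsy
    linarith
  · obtain ⟨y, hy, hsy⟩ := h.exists_mem_sphereStar_norm_sub_le hθ0 hθ (norm_eq_of_mem_sphere (U s))
    obtain ⟨t, ht⟩ := hsurj ⟨y, by simpa using hy.1⟩
    obtain rfl : (U t : F) = y := by rw [ht]
    have hft := hf_star t ((map_mem_sphereStar_iff hU hsurj hflat).1 hy)
    have hst := (le_abs_self _).trans (abs_apply_le_norm hf ((t : E) - s))
    rw [norm_map_sub_map hU, norm_sub_rev] at hsy
    rw [map_sub] at hst
    linarith

end IsSpike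

end Spike

section Extension

variable {E F : Type*} [NormedAddCommGroup E] [NormedSpace ℝ E]
  [NormedAddCommGroup F] [NormedSpace ℝ F]

lemma eq_zero_or_exists_eq_norm_smul (x : E) :
    x = 0 ∨ ∃ s : sphere (0 : E) 1, x = ‖x‖ • (s : E) := by
  refine or_iff_not_imp_left.2 fun hx => ⟨⟨NormedSpace.normalize x, ?_⟩, ?_⟩
  · simpa using NormedSpace.norm_normalize hx
  · exact (NormedSpace.norm_smul_normalize x).symm

theorem exists_linearIsometryEquiv_of_separating {ι : Type*}
    {U : sphere (0 : E) 1 → sphere (0 : F) 1} (hsurj : Function.Surjective U)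
    {f : ι → E →ₗ[ℝ] ℝ} {c : ι → F →ₗ[ℝ] ℝ}
    (hsep : ∀ y, (∀ j, c j y = 0) → y = 0) (hfc : ∀ j (s : sphere (0 : E) 1), f j s = c j (U s)) :
    ∃ V : E ≃ₗᵢ[ℝ] F, ∀ s : sphere (0 : E) 1, V s = U s := by
  have ext_coord {y z : F} (hyz : ∀ j, c j y = c j z) : y = z :=
    sub_eq_zero.1 (hsep _ fun j => by rw [map_sub, hyz, sub_self])
  have exists_image (x : E) : ∃ y : F, ‖y‖ = ‖x‖ ∧ ∀ j, c j y = f j x := by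
    obtain rfl | ⟨s, hs⟩ := eq_zero_or_exists_eq_norm_smul x
    · exact ⟨0, by simp⟩
    · refine ⟨‖x‖ • (U s : F), by simp [norm_smul], fun j => ?_⟩
      conv_rhs => rw [hs]
      rw [map_smul, map_smul, hfc]
  choose V hV_norm hV_coord using exists_image
  let V' : E →ₗᵢ[ℝ] F :=
    { toFun := V
      map_add' := fun x y => ext_coord fun j => by simp only [map_add, hV_coord]
      map_smul' := fun r x => ext_coord fun j => by simp only [map_smul, hV_coord, RingHom.id_apply]
      norm_map' := hV_norm }
  have hV'U (s : sphere (0 : E) 1) : V' s = U s :=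
    ext_coord fun j => (hV_coord s j).trans (hfc j s)
  have hV'_surj : Function.Surjective V' := by
    intro y
    obtain rfl | ⟨t, ht⟩ := eq_zero_or_exists_eq_norm_smul y
    · exact ⟨0, map_zero V'⟩
    · obtain ⟨s, rfl⟩ := hsurj t
      exact ⟨‖y‖ • (s : E), by rw [map_smul, hV'U, ← ht]⟩
  exact ⟨.ofSurjective V' hV'_surj, hV'U⟩

theorem exists_linearIsometryEquiv_of_isSpike {ι : Type*} {θ : ℝ} (hθ0 : 0 ≤ θ) (hθ : θ ≤ 1 / 2)
    {v : ι → F} {c : ι → StrongDual ℝ F} (hspike : ∀ j, IsSpike θ (v j) (c j))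
    (hsep : ∀ y, (∀ j, c j y = 0) → y = 0) {U : sphere (0 : E) 1 → sphere (0 : F) 1}
    (hU : Isometry U) (hsurj : Function.Surjective U) :
    ∃ V : E ≃ₗᵢ[ℝ] F, ∀ s : sphere (0 : E) 1, V s = U s := by
  choose f hf using fun j => (hspike j).exists_dual_eq_comp hθ0 hθ hU hsurj
  exact exists_linearIsometryEquiv_of_separating hsurj (f := fun j => (f j : E →ₗ[ℝ] ℝ))
    (c := fun j => (c j : F →ₗ[ℝ] ℝ)) hsep hf

end Extension

section TsirelsonNorm

variable {θ : ℝ} {S : Set (Finset ℕ+)}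

/-- The `ℓ₁` norm on `c₀₀`, an upper bound for the suprema defining the Tsirelson norm. -/
def l1Norm (x : ℕ+ →₀ ℝ) : ℝ :=
  x.sum fun _ a => |a|

lemma l1Norm_nonneg (x : ℕ+ →₀ ℝ) : 0 ≤ l1Norm x :=
  Finset.sum_nonneg fun _ _ => abs_nonneg _

lemma l1Norm_single (j : ℕ+) (t : ℝ) : l1Norm (Finsupp.single j t) = |t| :=
  Finsupp.sum_single_index abs_zero

lemma abs_le_l1Norm (x : ℕ+ →₀ ℝ) (i : ℕ+) : |x i| ≤ l1Norm x := by
  by_cases hi : i ∈ x.support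
  · exact Finset.single_le_sum (f := fun i => |x i|) (fun _ _ => abs_nonneg _) hi
  · simpa [Finsupp.notMem_support_iff.1 hi] using l1Norm_nonneg x

lemma tsProj_apply (E : Finset ℕ+) (x : ℕ+ →₀ ℝ) (i : ℕ+) :
    tsProj E x i = if i ∈ E then x i else 0 :=
  Finsupp.filter_apply _ _ _

lemma tsProj_add (E : Finset ℕ+) (x y : ℕ+ →₀ ℝ) : tsProj E (x + y) = tsProj E x + tsProj E y :=
  Finsupp.filter_add

lemma l1Norm_tsProj (E : Finset ℕ+) (x : ℕ+ →₀ ℝ) :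
    l1Norm (tsProj E x) = ∑ i ∈ x.support with i ∈ E, |x i| := by
  rw [l1Norm, Finsupp.sum, tsProj, Finsupp.support_filter]
  refine Finset.sum_congr rfl fun i hi => ?_
  rw [Finsupp.filter_apply_pos _ _ (Finset.mem_filter.1 hi).2]

lemma TsAdmissible.disjoint {d : ℕ} {E : Fin d → Finset ℕ+} (hE : TsAdmissible S E) {m n : Fin d}
    (hmn : m ≠ n) : Disjoint (E m) (E n) := by
  refine Finset.disjoint_left.2 fun i hm hn => ?_
  rcases hmn.lt_or_gt with hlt | hlt
  · exact lt_irrefl i (hE.2.1 m n hlt i hm i hn)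
  · exact lt_irrefl i (hE.2.1 n m hlt i hn i hm)

lemma TsAdmissible.sum_l1Norm_tsProj_le {d : ℕ} {E : Fin d → Finset ℕ+} (hE : TsAdmissible S E)
    (x : ℕ+ →₀ ℝ) : ∑ n, l1Norm (tsProj (E n) x) ≤ l1Norm x := by
  simp only [l1Norm_tsProj]
  have hdisj : ((Finset.univ : Finset (Fin d)) : Set (Fin d)).PairwiseDisjoint
      fun n => x.support.filter (· ∈ E n) := fun m _ n _ hmn =>
    Finset.disjoint_filter.2 fun i _ hm hn => Finset.disjoint_left.1 (hE.disjoint hmn) hm hn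
  rw [← Finset.sum_biUnion hdisj]
  exact Finset.sum_le_sum_of_subset_of_nonneg
    (Finset.biUnion_subset.2 fun _ _ => Finset.filter_subset _ _) fun _ _ _ => abs_nonneg _

lemma tnormAux_nonneg (m : ℕ) (x : ℕ+ →₀ ℝ) : 0 ≤ tnormAux θ S m x := by
  induction m with
  | zero => exact Real.iSup_nonneg fun _ => abs_nonneg _
  | succ m ih => exact ih.trans (le_max_left _ _)

lemma abs_le_tnormAux (m : ℕ) (x : ℕ+ →₀ ℝ) (i : ℕ+) : |x i| ≤ tnormAux θ S m x := by
  induction m with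
  | zero => exact le_ciSup (f := fun i => |x i|) ⟨l1Norm x, forall_mem_range.2 (abs_le_l1Norm x)⟩ i
  | succ m ih => exact ih.trans (le_max_left _ _)

lemma tnormAux_zero_le {x : ℕ+ →₀ ℝ} {r : ℝ} (h : ∀ i, |x i| ≤ r) : tnormAux θ S 0 x ≤ r :=
  ciSup_le h

lemma tnormAux_succ_le {m : ℕ} {x : ℕ+ →₀ ℝ} {r : ℝ} (hm : tnormAux θ S m x ≤ r)
    (hsum : ∀ (d : ℕ) (E : Fin d → Finset ℕ+), TsAdmissible S E →
      θ * ∑ i, tnormAux θ S m (tsProj (E i) x) ≤ r) :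
    tnormAux θ S (m + 1) x ≤ r := by
  refine max_le hm (Real.sSup_le ?_ ((tnormAux_nonneg m x).trans hm))
  rintro _ ⟨d, E, hE, rfl⟩
  exact hsum d E hE

lemma tnormAux_congr_abs (m : ℕ) {x y : ℕ+ →₀ ℝ} (h : ∀ i, |x i| = |y i|) :
    tnormAux θ S m x = tnormAux θ S m y := by
  induction m generalizing x y with
  | zero => simp only [tnormAux, h]
  | succ m ih =>
    have hproj (E : Finset ℕ+) : tnormAux θ S m (tsProj E x) = tnormAux θ S m (tsProj E y) :=
      ih fun i => by
        simp only [tsProj_apply]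
        split_ifs
        exacts [h i, rfl]
    simp only [tnormAux, hproj, ih h]

lemma tnorm_congr_abs {x y : ℕ+ →₀ ℝ} (h : ∀ i, |x i| = |y i|) : tnorm θ S x = tnorm θ S y := by
  simp only [tnorm, tnormAux_congr_abs _ h]

lemma TsAdmissible.mul_sum_tsProj_le (hθ0 : 0 ≤ θ) {d : ℕ} {E : Fin d → Finset ℕ+}
    (hE : TsAdmissible S E) {N : (ℕ+ →₀ ℝ) → ℝ} (hN : ∀ x, N x ≤ l1Norm x) (x : ℕ+ →₀ ℝ) :
    θ * ∑ i, N (tsProj (E i) x) ≤ θ * l1Norm x := by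
  gcongr
  exact (Finset.sum_le_sum fun i _ => hN _).trans (hE.sum_l1Norm_tsProj_le x)

lemma tnormAux_le_l1Norm (hθ0 : 0 ≤ θ) (hθ1 : θ ≤ 1) (m : ℕ) (x : ℕ+ →₀ ℝ) :
    tnormAux θ S m x ≤ l1Norm x := by
  induction m generalizing x with
  | zero => exact tnormAux_zero_le (abs_le_l1Norm x)
  | succ m ih => exact tnormAux_succ_le (ih x) fun d E hE =>
      (hE.mul_sum_tsProj_le hθ0 ih x).trans (mul_le_of_le_one_left (l1Norm_nonneg x) hθ1)

lemma TsAdmissible.mul_sum_tnormAux_le_succ (hθ0 : 0 ≤ θ) (hθ1 : θ ≤ 1) {d : ℕ}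
    {E : Fin d → Finset ℕ+} (hE : TsAdmissible S E) (m : ℕ) (x : ℕ+ →₀ ℝ) :
    θ * ∑ i, tnormAux θ S m (tsProj (E i) x) ≤ tnormAux θ S (m + 1) x := by
  refine le_max_of_le_right (le_csSup ⟨θ * l1Norm x, ?_⟩ ⟨d, E, hE, rfl⟩)
  rintro _ ⟨d, E, hE, rfl⟩
  exact hE.mul_sum_tsProj_le hθ0 (tnormAux_le_l1Norm hθ0 hθ1 m) x

lemma mul_sum_tnormAux_tsProj_add_le (hθ0 : 0 ≤ θ) {d : ℕ} (E : Fin d → Finset ℕ+) {m : ℕ}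
    (hadd : ∀ x y, tnormAux θ S m (x + y) ≤ tnormAux θ S m x + tnormAux θ S m y)
    (x y : ℕ+ →₀ ℝ) :
    θ * ∑ i, tnormAux θ S m (tsProj (E i) (x + y)) ≤
      θ * ∑ i, tnormAux θ S m (tsProj (E i) x) + θ * ∑ i, tnormAux θ S m (tsProj (E i) y) := by
  rw [← mul_add, ← Finset.sum_add_distrib]
  gcongr with i
  rw [tsProj_add]
  exact hadd _ _

lemma tnormAux_add_le (hθ0 : 0 ≤ θ) (hθ1 : θ ≤ 1) (m : ℕ) (x y : ℕ+ →₀ ℝ) :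
    tnormAux θ S m (x + y) ≤ tnormAux θ S m x + tnormAux θ S m y := by
  induction m generalizing x y with
  | zero =>
    exact tnormAux_zero_le fun i => (abs_add_le (x i) (y i)).trans
      (add_le_add (abs_le_tnormAux 0 x i) (abs_le_tnormAux 0 y i))
  | succ m ih =>
    refine tnormAux_succ_le ((ih x y).trans (add_le_add (le_max_left _ _) (le_max_left _ _)))
      fun d E hE => (mul_sum_tnormAux_tsProj_add_le hθ0 E ih x y).trans (add_le_add ?_ ?_)
    · exact hE.mul_sum_tnormAux_le_succ hθ0 hθ1 m x
    · exact hE.mul_sum_tnormAux_le_succ hθ0 hθ1 m y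

lemma tnormAux_add_single_le (hθ0 : 0 ≤ θ) (hθ1 : θ ≤ 1) (m : ℕ) (x : ℕ+ →₀ ℝ) (j : ℕ+) (t : ℝ) :
    tnormAux θ S m (x + Finsupp.single j t) ≤ max |x j + t| (tnormAux θ S m x + θ * |t|) := by
  induction m with
  | zero =>
    refine tnormAux_zero_le fun i => ?_
    obtain rfl | hij := eq_or_ne j i
    · simp
    · rw [Finsupp.add_apply, Finsupp.single_eq_of_ne' hij, add_zero]
      exact le_max_of_le_right
        (le_add_of_le_of_nonneg (abs_le_tnormAux 0 x i) (mul_nonneg hθ0 (abs_nonneg t)))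
  | succ m ih =>
    refine tnormAux_succ_le (ih.trans ?_) fun d E hE => le_max_of_le_right ?_
    · gcongr
      exact le_max_left _ _
    · refine (mul_sum_tnormAux_tsProj_add_le hθ0 E (tnormAux_add_le hθ0 hθ1 m) _ _).trans
        (add_le_add (hE.mul_sum_tnormAux_le_succ hθ0 hθ1 m x) ?_)
      simpa only [l1Norm_single] using
        hE.mul_sum_tsProj_le hθ0 (tnormAux_le_l1Norm hθ0 hθ1 m) (Finsupp.single j t)

lemma tnormAux_le_tnorm (hθ0 : 0 ≤ θ) (hθ1 : θ ≤ 1) (m : ℕ) (x : ℕ+ →₀ ℝ) :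
    tnormAux θ S m x ≤ tnorm θ S x :=
  le_ciSup ⟨l1Norm x, forall_mem_range.2 fun m => tnormAux_le_l1Norm hθ0 hθ1 m x⟩ m

lemma abs_le_tnorm (hθ0 : 0 ≤ θ) (hθ1 : θ ≤ 1) (x : ℕ+ →₀ ℝ) (i : ℕ+) : |x i| ≤ tnorm θ S x :=
  (abs_le_tnormAux 0 x i).trans (tnormAux_le_tnorm hθ0 hθ1 0 x)

lemma tnorm_add_single_le (hθ0 : 0 ≤ θ) (hθ1 : θ ≤ 1) (x : ℕ+ →₀ ℝ) (j : ℕ+) (t : ℝ) :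
    tnorm θ S (x + Finsupp.single j t) ≤ max |x j + t| (tnorm θ S x + θ * |t|) := by
  refine ciSup_le fun m => (tnormAux_add_single_le hθ0 hθ1 m x j t).trans ?_
  gcongr
  exact tnormAux_le_tnorm hθ0 hθ1 m x

end TsirelsonNorm

namespace IsTsirelsonSpace

variable {θ : ℝ} {n : ℕ} {X : Type*} [NormedAddCommGroup X] [NormedSpace ℝ X] {e : ℕ+ → X}

lemma norm_linearCombination (hX : IsTsirelsonSpace θ n X e) (a : ℕ+ →₀ ℝ) :
    ‖Finsupp.linearCombination ℝ e a‖ = tnorm θ (Schreier n) a :=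
  hX.norm_embed a

lemma denseRange_linearCombination (hX : IsTsirelsonSpace θ n X e) :
    DenseRange (Finsupp.linearCombination ℝ e) :=
  hX.dense_embed

/-- The coefficients `a` of the unique expansion `x = ∑ᵢ aᵢ eᵢ`, as a linear function of `x`. -/
def coeff (hX : IsTsirelsonSpace θ n X e) : X →ₗ[ℝ] ℕ+ → ℝ where
  toFun x := (hX.expansion x).choose
  map_add' x y := ((hX.expansion _).choose_spec.2 _ (by
    simpa [add_smul] using
      (hX.expansion x).choose_spec.1.add (hX.expansion y).choose_spec.1)).symm
  map_smul' r x := ((hX.expansion _).choose_spec.2 _ (by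
    simpa [mul_smul] using (hX.expansion x).choose_spec.1.const_smul r)).symm

lemma hasSum_coeff (hX : IsTsirelsonSpace θ n X e) (x : X) :
    HasSum (fun i => hX.coeff x i • e i) x :=
  (hX.expansion x).choose_spec.1

lemma coeff_linearCombination (hX : IsTsirelsonSpace θ n X e) (a : ℕ+ →₀ ℝ) :
    hX.coeff (Finsupp.linearCombination ℝ e a) = a := by
  refine ((hX.expansion _).choose_spec.2 a ?_).symm
  exact hasSum_sum_of_ne_finset_zero fun i hi => by
    simp [Finsupp.notMem_support_iff.1 hi]

lemma coeff_unitVector (hX : IsTsirelsonSpace θ n X e) (j : ℕ+) :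
    hX.coeff (e j) = Finsupp.single j 1 := by
  simpa using hX.coeff_linearCombination (Finsupp.single j 1)

lemma abs_coeff_le_norm (hX : IsTsirelsonSpace θ n X e) (hθ0 : 0 ≤ θ) (hθ1 : θ ≤ 1) (x : X)
    (j : ℕ+) : |hX.coeff x j| ≤ ‖x‖ := by
  refine ge_of_tendsto (hX.hasSum_coeff x).norm ?_
  filter_upwards [Filter.eventually_ge_atTop {j}] with s hs
  have hj : j ∈ s := Finset.singleton_subset_iff.1 hs
  have hpartial : ∑ i ∈ s, hX.coeff x i • e i =
      Finsupp.linearCombination ℝ e (Finsupp.indicator s fun i _ => hX.coeff x i) := by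
    simp only [Finsupp.indicator_eq_sum_single, map_sum, Finsupp.linearCombination_single]
  rw [hpartial, hX.norm_linearCombination]
  simpa [hj] using abs_le_tnorm (S := Schreier n) hθ0 hθ1
    (Finsupp.indicator s fun i _ => hX.coeff x i) j

/-- The unit vectors of a Tsirelson space as an unconditional Schauder basis. -/
def schauderBasis (hX : IsTsirelsonSpace θ n X e) (hθ0 : 0 ≤ θ) (hθ1 : θ ≤ 1) :
    UnconditionalSchauderBasis ℕ+ ℝ X where
  basis := e
  coord j := (LinearMap.proj j ∘ₗ hX.coeff).mkContinuous 1 fun x => by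
    simpa using hX.abs_coeff_le_norm hθ0 hθ1 x j
  ortho i j := by
    obtain rfl | hij := eq_or_ne i j <;> simp [coeff_unitVector, *]
  expansion x := hX.hasSum_coeff x

lemma schauderBasis_coord_apply (hX : IsTsirelsonSpace θ n X e) (hθ0 : 0 ≤ θ) (hθ1 : θ ≤ 1)
    (j : ℕ+) (x : X) : (hX.schauderBasis hθ0 hθ1).coord j x = hX.coeff x j :=
  rfl

theorem isSpike_coord (hX : IsTsirelsonSpace θ n X e) (hθ0 : 0 ≤ θ) (hθ1 : θ ≤ 1) (j : ℕ+) :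
    IsSpike θ (e j) ((hX.schauderBasis hθ0 hθ1).coord j) where
  apply_self := by simp [schauderBasis_coord_apply, coeff_unitVector]
  opNorm_le_one := ContinuousLinearMap.opNorm_le_bound _ zero_le_one fun x => by
    simpa [schauderBasis_coord_apply] using hX.abs_coeff_le_norm hθ0 hθ1 x j
  norm_add_smul_le x t := by
    refine hX.denseRange_linearCombination.induction_on x
      (isClosed_le (by fun_prop) (by fun_prop)) fun a => ?_
    rw [schauderBasis_coord_apply, coeff_linearCombination,
      ← Finsupp.linearCombination_single ℝ t j, ← map_add, hX.norm_linearCombination,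
      hX.norm_linearCombination]
    exact tnorm_add_single_le hθ0 hθ1 a j t
  norm_sub_two_smul_le x := by
    refine hX.denseRange_linearCombination.induction_on x
      (isClosed_le (by fun_prop) (by fun_prop)) fun a => ?_
    rw [schauderBasis_coord_apply, coeff_linearCombination,
      ← Finsupp.linearCombination_single ℝ _ j, ← map_sub, hX.norm_linearCombination,
      hX.norm_linearCombination]
    refine (tnorm_congr_abs fun i => ?_).le
    obtain rfl | hij := eq_or_ne j i
    · rw [Finsupp.sub_apply, Finsupp.single_eq_same, ← abs_neg]
      ring_nf
    · simp [Finsupp.single_eq_of_ne' hij]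

lemma eq_zero_of_coord_eq_zero (hX : IsTsirelsonSpace θ n X e) (hθ0 : 0 ≤ θ) (hθ1 : θ ≤ 1) {x : X}
    (hx : ∀ j, (hX.schauderBasis hθ0 hθ1).coord j x = 0) : x = 0 :=
  ((hX.schauderBasis hθ0 hθ1).expansion x).unique (by simp [hx])

end IsTsirelsonSpace

theorem tsirelson_tingley_S1_general {θ : ℝ} (hθ0 : 0 ≤ θ) (hθ : θ ≤ 1 / 2) {n : ℕ}
    {X : Type*} [NormedAddCommGroup X] [NormedSpace ℝ X] {e : ℕ+ → X}
    (hX : IsTsirelsonSpace θ n X e) {Y : Type*} [NormedAddCommGroup Y] [NormedSpace ℝ Y]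
    {U : sphere (0 : Y) 1 → sphere (0 : X) 1} (hU : Isometry U)
    (hUsurj : Function.Surjective U) :
    ∃ V : Y ≃ₗᵢ[ℝ] X, ∀ y : sphere (0 : Y) 1, V y = U y :=
  have hθ1 : θ ≤ 1 := by linarith
  exists_linearIsometryEquiv_of_isSpike hθ0 hθ (hX.isSpike_coord hθ0 hθ1)
    (fun _ => hX.eq_zero_of_coord_eq_zero hθ0 hθ1) hU hUsurj

/-- Tingley's problem for `T[θ, S₁]`, integer `θ⁻¹ ≥ 2`.
Every surjective isometry of the unit sphere of `T[θ, S₁]` extends to a surjective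
linear isometry of the whole space. -/
theorem tsirelson_tingley_S1
    (θ : ℝ) (hθ0 : 0 < θ) (k : ℕ) (hk : 2 ≤ k) (hθk : θ⁻¹ = (k : ℝ))
    (X : Type*) [NormedAddCommGroup X] [NormedSpace ℝ X] (e : ℕ+ → X)
    (hX : IsTsirelsonSpace θ 1 X e)
    (U : Metric.sphere (0 : X) 1 → Metric.sphere (0 : X) 1)
    (hU : Isometry U) (hUsurj : Function.Surjective U) :
    ∃ V : X →ₗᵢ[ℝ] X, Function.Surjective V ∧
      ∀ x : Metric.sphere (0 : X) 1, V (x : X) = (U x : X) := by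
  have hθ : θ ≤ 1 / 2 := by
    rw [← inv_inv θ, hθk, one_div]
    exact inv_anti₀ two_pos (by exact_mod_cast hk)
  obtain ⟨V, hV⟩ := tsirelson_tingley_S1_general hθ0.le hθ hX hU hUsurj
  exact ⟨V.toLinearIsometry, V.surjective, hV⟩
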